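/- Let B be a k×p real matrix and A a k×r real matrix, let f : (0,∞)^p → ℝ^r be dimensionally covariant with respect to A and B, and for each l = 1, …, r let y_l ∈ ℝ^p satisfy B y_l = −a_l, where a_l is the l-th column of A. If x, x′ ∈ (0,∞)^p are such that ∏_{i=1}^p x_i^{π_i} = ∏_{i=1}^p (x′_i)^{π_i} for every π ∈ ℝ^p with Bπ = 0, then for every l = 1, …, r, f(x)_l · ∏_{i=1}^p x_i^{(y_l)_i} = f(x′)_l · ∏_{i=1}^p (x′_i)^{(y_l)_i}. (The dimensionless responses are determined by the values of the dimensionless predictor monomials; this is the well-definedness of the reduced function h in the Multivariate Buckingham Π-Theorem.) -/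

import Mathlib

/-!
In logarithmic coordinates a rescaling of the units is a translation by a vector of the row space
of the dimension matrix `B`, and the dimensionless monomials are the linear forms given by the
kernel of `B`. Since the row space is the annihilator of the kernel, two positive points that agree
on all dimensionless monomials differ by a rescaling. A dimensionless response is invariant under
rescaling: the factor gained by the response cancels the one gained by the monomial that makes it
dimensionless.
-/

open Matrix

theorem exists_vecMul_eq_of_dotProduct_eq_zero {K κ ι : Type*} [Field K] [Fintype κ] [Fintype ι]
    {B : Matrix κ ι K} {v : ι → K} (hv : ∀ w, B *ᵥ w = 0 → v ⬝ᵥ w = 0) :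
    ∃ t : κ → K, t ᵥ* B = v := by
  classical
  have hker : ⨅ j, LinearMap.ker (dotProductEquiv K ι (B j)) ≤
      LinearMap.ker (dotProductEquiv K ι v) := fun w hw =>
    hv w (funext fun j => (Submodule.mem_iInf _).1 hw j)
  obtain ⟨t, ht⟩ := (Submodule.mem_span_range_iff_exists_fun K).1 (mem_span_of_iInf_ker_le_ker hker)
  refine ⟨t, (dotProductEquiv K ι).injective ?_⟩
  rw [vecMul_eq_sum, map_sum, ← ht]
  simp only [map_smul]

/-- The monomial `∏ᵢ xᵢ ^ wᵢ` with real exponent vector `w`. It is meant for positive `x`, where it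
is the exponential of a linear form in `log x`. -/
noncomputable def powerProduct {ι : Type*} [Fintype ι] (x w : ι → ℝ) : ℝ :=
  ∏ i, x i ^ w i

/-- The scaling of predictors with dimension matrix `B` induced by the change `c` of the units of
the fundamental dimensions. -/
noncomputable def rescale {κ ι : Type*} [Fintype κ] (B : Matrix κ ι ℝ) (c : κ → ℝ) (x : ι → ℝ) :
    ι → ℝ :=
  fun i => powerProduct c (B.col i) * x i

/-- Dimensional covariance of a single response with dimension vector `a`, as a function of
predictors with dimension matrix `B`. Only the values of `f` at positive points matter. The response
may take values in any set on which `ℝ` acts, such as a space of vectors or tensors. -/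
def IsDimensionallyCovariant {κ ι E : Type*} [Fintype κ] [SMul ℝ E] (B : Matrix κ ι ℝ) (a : κ → ℝ)
    (f : (ι → ℝ) → E) : Prop :=
  ∀ c : κ → ℝ, (∀ j, 0 < c j) → ∀ x : ι → ℝ, (∀ i, 0 < x i) →
    f (rescale B c x) = powerProduct c a • f x

section PowerProduct

variable {ι : Type*} [Fintype ι] {x : ι → ℝ}

theorem powerProduct_eq_exp (hx : ∀ i, 0 < x i) (w : ι → ℝ) :
    powerProduct x w = Real.exp ((Real.log ∘ x) ⬝ᵥ w) := by
  simp only [powerProduct, dotProduct, Function.comp_apply, Real.exp_sum,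
    Real.rpow_def_of_pos (hx _)]

theorem powerProduct_pos (hx : ∀ i, 0 < x i) (w : ι → ℝ) : 0 < powerProduct x w :=
  Finset.prod_pos fun i _ => Real.rpow_pos_of_pos (hx i) (w i)

theorem log_powerProduct (hx : ∀ i, 0 < x i) (w : ι → ℝ) :
    Real.log (powerProduct x w) = (Real.log ∘ x) ⬝ᵥ w := by
  rw [powerProduct_eq_exp hx, Real.log_exp]

theorem powerProduct_neg_mul_cancel (hx : ∀ i, 0 < x i) (w : ι → ℝ) :
    powerProduct x (-w) * powerProduct x w = 1 := by
  rw [powerProduct_eq_exp hx, powerProduct_eq_exp hx, ← Real.exp_add, dotProduct_neg,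
    neg_add_cancel, Real.exp_zero]

end PowerProduct

section Rescale

variable {κ ι : Type*} [Fintype κ] {B : Matrix κ ι ℝ} {c : κ → ℝ} {x x' : ι → ℝ}

theorem rescale_pos (hc : ∀ j, 0 < c j) (hx : ∀ i, 0 < x i) (i : ι) : 0 < rescale B c x i :=
  mul_pos (powerProduct_pos hc _) (hx i)

theorem log_comp_rescale (hc : ∀ j, 0 < c j) (hx : ∀ i, 0 < x i) :
    Real.log ∘ rescale B c x = (Real.log ∘ c) ᵥ* B + Real.log ∘ x := by
  ext i
  calc Real.log (powerProduct c (B.col i) * x i)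
      = Real.log (powerProduct c (B.col i)) + Real.log (x i) :=
        Real.log_mul (powerProduct_pos hc _).ne' (hx i).ne'
    _ = (Real.log ∘ c) ⬝ᵥ B.col i + Real.log (x i) := by rw [log_powerProduct hc]

variable [Fintype ι]

theorem powerProduct_rescale (hc : ∀ j, 0 < c j) (hx : ∀ i, 0 < x i) (w : ι → ℝ) :
    powerProduct (rescale B c x) w = powerProduct c (B *ᵥ w) * powerProduct x w := by
  rw [powerProduct_eq_exp (rescale_pos hc hx), log_comp_rescale hc hx, add_dotProduct,
    ← dotProduct_mulVec, Real.exp_add, ← powerProduct_eq_exp hc, ← powerProduct_eq_exp hx]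

theorem exists_rescale_eq_of_powerProduct_eq (hx : ∀ i, 0 < x i) (hx' : ∀ i, 0 < x' i)
    (h : ∀ w, B *ᵥ w = 0 → powerProduct x w = powerProduct x' w) :
    ∃ c : κ → ℝ, (∀ j, 0 < c j) ∧ rescale B c x = x' := by
  have hlog : ∀ w, B *ᵥ w = 0 → (Real.log ∘ x' - Real.log ∘ x) ⬝ᵥ w = 0 := fun w hw => by
    rw [sub_dotProduct, ← log_powerProduct hx', ← log_powerProduct hx, h w hw, sub_self]
  obtain ⟨t, ht⟩ := exists_vecMul_eq_of_dotProduct_eq_zero hlog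
  have hexp : ∀ j, 0 < (Real.exp ∘ t) j := fun j => Real.exp_pos (t j)
  have hlog_exp : Real.log ∘ Real.exp ∘ t = t := funext fun j => Real.log_exp (t j)
  have hlog_eq : Real.log ∘ rescale B (Real.exp ∘ t) x = Real.log ∘ x' := by
    rw [log_comp_rescale hexp hx, hlog_exp, ht, sub_add_cancel]
  exact ⟨Real.exp ∘ t, hexp, funext fun i =>
    Real.log_injOn_pos (rescale_pos hexp hx i) (hx' i) (congrFun hlog_eq i)⟩

end Rescale

section Response

variable {κ ι E : Type*} [Fintype κ] [Fintype ι] [MulAction ℝ E] {B : Matrix κ ι ℝ} {a : κ → ℝ}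
  {f : (ι → ℝ) → E} {y x x' : ι → ℝ}

theorem IsDimensionallyCovariant.powerProduct_smul_rescale (hf : IsDimensionallyCovariant B a f)
    (hy : B *ᵥ y = -a) {c : κ → ℝ} (hc : ∀ j, 0 < c j) (hx : ∀ i, 0 < x i) :
    powerProduct (rescale B c x) y • f (rescale B c x) = powerProduct x y • f x := by
  rw [hf c hc x hx, powerProduct_rescale hc hx, hy, smul_smul, mul_right_comm,
    powerProduct_neg_mul_cancel hc, one_mul]

theorem buckingham_reduced_welldefined_general (hf : IsDimensionallyCovariant B a f)
    (hy : B *ᵥ y = -a) (hx : ∀ i, 0 < x i) (hx' : ∀ i, 0 < x' i)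
    (hmonos : ∀ w, B *ᵥ w = 0 → powerProduct x w = powerProduct x' w) :
    powerProduct x y • f x = powerProduct x' y • f x' := by
  obtain ⟨c, hc, rfl⟩ := exists_rescale_eq_of_powerProduct_eq hx hx' hmonos
  exact (hf.powerProduct_smul_rescale hy hc hx).symm

end Response

/-- **Well-definedness of the reduced function in the Multivariate Buckingham Π-Theorem.**
If `f` is dimensionally covariant with respect to `A` and `B`, `B y_l = -a_l`, and two
positive points `x, x'` give equal values on every dimensionless predictor monomial
(exponent vectors `π` with `Bπ = 0`), then they give equal values for every dimensionless
response `f(x)_l ∏ᵢ xᵢ^{(y_l)ᵢ}`. -/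
theorem buckingham_reduced_welldefined
    (k p r : ℕ)
    (B : Matrix (Fin k) (Fin p) ℝ) (A : Matrix (Fin k) (Fin r) ℝ)
    (f : (Fin p → ℝ) → (Fin r → ℝ))
    (hf : ∀ c : Fin k → ℝ, (∀ j, 0 < c j) → ∀ x : Fin p → ℝ, (∀ i, 0 < x i) →
      ∀ l : Fin r,
        f (fun i => (∏ j, c j ^ B j i) * x i) l = (∏ j, c j ^ A j l) * f x l)
    (y : Fin r → (Fin p → ℝ))
    (hy : ∀ l : Fin r, B.mulVec (y l) = fun j => -(A j l))
    (x x' : Fin p → ℝ) (hx : ∀ i, 0 < x i) (hx' : ∀ i, 0 < x' i)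
    (hmonos : ∀ π : Fin p → ℝ, B.mulVec π = 0 →
      (∏ i, x i ^ π i) = ∏ i, x' i ^ π i) :
    ∀ l : Fin r,
      f x l * ∏ i, x i ^ y l i = f x' l * ∏ i, x' i ^ y l i := by
  intro l
  have hfl : IsDimensionallyCovariant B (fun j => A j l) (fun x => f x l) :=
    fun c hc x hx => hf c hc x hx l
  simpa only [smul_eq_mul, mul_comm, powerProduct] using
    buckingham_reduced_welldefined_general hfl (hy l) hx hx' hmonos
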